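/- arXiv:2402.03249 — 2 statements merged into one kernel-verified Lean document; each statement's English description precedes it below -/
import Mathlib

section
/- Let β > 1 and for each n let X ~ P_{β,Q^{CW}} be a Curie–Weiss Ising vector on {−1,1}^n. Let m = m(β) be the unique positive root of m = tanh(βm). Then the conditional law of √n(X̄_n − m) given the event {X̄_n > 0} converges in distribution to N(0, (1−m²)/(1 − β(1−m²))). -/
open MeasureTheory ProbabilityTheory Filter Topology Matrix

noncomputable section

/-- The `±1` configuration associated to a boolean configuration. -/
def pmVec {ι : Type*} (s : ι → Bool) : ι → ℝ := fun i => if s i then 1 else -1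

/-- Unnormalized Ising weight `exp((β/2) zᵀ Q z)`. -/
def isingWeight {ι : Type*} [Fintype ι] (β : ℝ) (Q : Matrix ι ι ℝ) (z : ι → ℝ) : ℝ :=
  Real.exp (β / 2 * (z ⬝ᵥ Q.mulVec z))

/-- Ising partition function `Z(β,Q)`. -/
def isingZ (ι : Type*) [Fintype ι] [DecidableEq ι] (β : ℝ) (Q : Matrix ι ι ℝ) : ℝ :=
  ∑ s : ι → Bool, isingWeight β Q (pmVec s)

/-- The Ising probability measure `P_{β,Q}` on `{±1}^ι ⊆ ℝ^ι`:
`P(z) = exp((β/2) zᵀQz) / Z(β,Q)`. -/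
def isingMeasure (ι : Type*) [Fintype ι] [DecidableEq ι] (β : ℝ) (Q : Matrix ι ι ℝ) :
    Measure (ι → ℝ) :=
  ∑ s : ι → Bool,
    ENNReal.ofReal (isingWeight β Q (pmVec s) / isingZ ι β Q) • Measure.dirac (pmVec s)

/-- Sample mean `X̄ = (1/n) Σ_i X_i`. -/
def sampleMean {ι : Type*} [Fintype ι] (x : ι → ℝ) : ℝ := (∑ i, x i) / (Fintype.card ι : ℝ)

/-- Sample covariance `T_n = (1/n) Σ_i (X_i - X̄)(Y_i - Ȳ)`. -/
def sampleCov {ι : Type*} [Fintype ι] (x y : ι → ℝ) : ℝ :=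
  (∑ i, (x i - sampleMean x) * (y i - sampleMean y)) / (Fintype.card ι : ℝ)

/-- Convergence in distribution: weak convergence of the laws, tested against
bounded continuous functions. -/
def TendstoInDistribution (μ : ℕ → Measure ℝ) (ν : Measure ℝ) : Prop :=
  ∀ f : BoundedContinuousFunction ℝ ℝ,
    Tendsto (fun n => ∫ x, f x ∂(μ n)) atTop (𝓝 (∫ x, f x ∂ν))

/-- The Curie–Weiss interaction matrix `Q^{CW} = (1/n)(11ᵀ - I)`. -/
def QCW (n : ℕ) : Matrix (Fin n) (Fin n) ℝ := fun i j => if i = j then 0 else (n : ℝ)⁻¹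

/-- `m(β)`: equal to `0` for `β ≤ 1`, and to the unique positive root of
`m = tanh(β m)` for `β > 1`. -/
def isingMag (β : ℝ) : ℝ := sSup {m : ℝ | 0 ≤ m ∧ m = Real.tanh (β * m)}


lemma cw_lt_sinh_mul_cosh {h : ℝ} (hh : 0 < h) : h < Real.sinh h * Real.cosh h := by
  have h1 : h < Real.sinh h := Real.self_lt_sinh_iff.2 hh
  have h2 := Real.one_le_cosh h
  nlinarith

lemma cw_hasDerivAt_tanh (x : ℝ) : HasDerivAt Real.tanh (1 / Real.cosh x ^ 2) x := by
  have h := (Real.hasDerivAt_sinh x).div (Real.hasDerivAt_cosh x) (Real.cosh_pos x).ne'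
  have e : Real.tanh = fun x => Real.sinh x / Real.cosh x := by
    ext x; exact Real.tanh_eq_sinh_div_cosh x
  rw [e]
  refine h.congr_deriv ?_
  have := Real.cosh_sq x
  congr 1
  nlinarith

lemma cw_hasDerivAt_logcosh (x : ℝ) :
    HasDerivAt (fun x => Real.log (Real.cosh x)) (Real.tanh x) x := by
  have h := (Real.hasDerivAt_cosh x).log (Real.cosh_pos x).ne'
  rwa [← Real.tanh_eq_sinh_div_cosh] at h

lemma cw_logcosh_gt {h : ℝ} (hh : 0 < h) :
    h * Real.tanh h / 2 < Real.log (Real.cosh h) := by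
  have hd : ∀ x, HasDerivAt (fun x => Real.log (Real.cosh x) - x * Real.tanh x / 2)
      (Real.tanh x - (1 * Real.tanh x + x * (1 / Real.cosh x ^ 2)) / 2) x := fun x =>
    (cw_hasDerivAt_logcosh x).sub (((hasDerivAt_id x).mul (cw_hasDerivAt_tanh x)).div_const 2)
  have hs : StrictMonoOn (fun x => Real.log (Real.cosh x) - x * Real.tanh x / 2) (Set.Ici 0) := by
    apply strictMonoOn_of_deriv_pos (convex_Ici 0)
    · exact fun x _ => (hd x).continuousAt.continuousWithinAt
    · intro x hx
      rw [interior_Ici] at hx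
      rw [(hd x).deriv]
      have hx' : 0 < x := hx
      have := cw_lt_sinh_mul_cosh hx'
      have hc := Real.cosh_pos x
      rw [Real.tanh_eq_sinh_div_cosh]
      have : Real.sinh x / Real.cosh x - (1 * (Real.sinh x / Real.cosh x) + x * (1 / Real.cosh x ^ 2)) / 2
        = (Real.sinh x * Real.cosh x - x) / (2 * Real.cosh x ^ 2) := by
        field_simp; ring
      rw [this]
      apply div_pos <;> [linarith; positivity]
  have := hs (Set.self_mem_Ici) (Set.mem_Ici.2 hh.le) hh
  simp at this
  linarith

lemma cw_one_sub_sq (h : ℝ) : 1 - Real.tanh h ^ 2 = 1 / Real.cosh h ^ 2 := by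
  have := Real.cosh_sq h
  have hc := Real.cosh_pos h
  rw [Real.tanh_eq_sinh_div_cosh]
  field_simp
  linarith

lemma cw_var_lt {β m : ℝ} (hβ : 1 < β) (hm : 0 < m) (hroot : m = Real.tanh (β * m)) :
    β * (1 - m ^ 2) < 1 := by
  have hh : 0 < β * m := by positivity
  have h1 := cw_lt_sinh_mul_cosh hh
  have hc := Real.cosh_pos (β * m)
  have e : m * Real.cosh (β * m) = Real.sinh (β * m) := by
    rw [Real.tanh_eq_sinh_div_cosh, eq_div_iff hc.ne'] at hroot; exact hroot
  have e2 : 1 - m ^ 2 = 1 / Real.cosh (β * m) ^ 2 := by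
    rw [← cw_one_sub_sq, ← hroot]
  rw [e2, mul_one_div, div_lt_one (by positivity)]
  rw [← e] at h1
  have : β * m < m * (Real.cosh (β * m)) ^ 2 := by nlinarith
  nlinarith

/-- Sub-Gaussian bound for the cumulant generating function on the relevant half line. -/
lemma cw_key {β m : ℝ} (hβ : 1 < β) (hm : 0 < m) (hroot : m = Real.tanh (β * m)) :
    ∃ κ b : ℝ, 0 < κ ∧ β < b ∧ κ * b < 1 ∧ ∀ u : ℝ, -(b * m) ≤ u →
      Real.log (Real.cosh (β * m + u)) - Real.log (Real.cosh (β * m)) - m * u ≤ κ * u ^ 2 / 2 := by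
  set h := β * m with hh_def
  have hh : 0 < h := by positivity
  have hβ0 : 0 < β := by linarith
  have hm1 : m < 1 := by rw [hroot]; exact Real.tanh_lt_one _
  have hlc := cw_logcosh_gt hh
  rw [← hroot] at hlc
  have hv := cw_var_lt hβ hm hroot
  have hv' : 1 - m ^ 2 < 1 / β := by rw [lt_div_iff₀ hβ0]; linarith
  have hq : 2 * (m * h - Real.log (Real.cosh h)) / h ^ 2 < 1 / β := by
    rw [div_lt_div_iff₀ (by positivity) hβ0]
    have : h ^ 2 = β * (m * h) := by rw [hh_def]; ring
    rw [this]; nlinarith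
  obtain ⟨κ, hκ1, hκ2⟩ := exists_between (max_lt hv' hq)
  obtain ⟨hκv, hκq⟩ := max_lt_iff.1 hκ1
  have hκ0 : 0 < κ := by nlinarith
  have hκβ : κ * β < 1 := by rwa [lt_div_iff₀ hβ0] at hκ2
  have hκ_lt : κ < 1 := by nlinarith
  set H : ℝ → ℝ := fun u => Real.log (Real.cosh (h + u)) - Real.log (Real.cosh h) - m * u
    - κ * u ^ 2 / 2 with hH
  have hd1 : ∀ u, HasDerivAt H (Real.tanh (h + u) - m - κ * u) u := by
    intro u
    have a1 : HasDerivAt (fun u => Real.log (Real.cosh (h + u))) (Real.tanh (h + u)) u :=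
      HasDerivAt.comp_const_add h u (cw_hasDerivAt_logcosh (h + u))
    have a2 := ((a1.sub_const (Real.log (Real.cosh h))).sub
      ((hasDerivAt_id u).const_mul m)).sub ((((hasDerivAt_id u).pow 2).const_mul κ).div_const 2)
    refine a2.congr_deriv ?_
    simp; ring
  have hd2 : ∀ u, HasDerivAt (fun u => Real.tanh (h + u) - m - κ * u)
      (1 / Real.cosh (h + u) ^ 2 - κ) u := by
    intro u
    have a1 : HasDerivAt (fun u => Real.tanh (h + u)) (1 / Real.cosh (h + u) ^ 2) u :=
      HasDerivAt.comp_const_add h u (cw_hasDerivAt_tanh (h + u))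
    have a2 := (a1.sub_const m).sub ((hasDerivAt_id u).const_mul κ)
    refine a2.congr_deriv ?_
    simp
  have hdH : deriv H = fun u => Real.tanh (h + u) - m - κ * u := funext fun u => (hd1 u).deriv
  have hddH : ∀ u, deriv^[2] H u = 1 / Real.cosh (h + u) ^ 2 - κ := by
    intro u
    simp only [Function.iterate_succ, Function.iterate_zero, Function.comp, id]
    rw [hdH, (hd2 u).deriv]
  have hHc : Continuous H := continuous_iff_continuousAt.2 fun u => (hd1 u).continuousAt
  have hHdiff : Differentiable ℝ H := fun u => (hd1 u).differentiableAt
  have hH'diff : Differentiable ℝ (deriv H) := by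
    rw [hdH]; exact fun u => (hd2 u).differentiableAt
  -- threshold
  obtain ⟨a, ⟨ha0, hah⟩, ha⟩ : ∃ a ∈ Set.Ioo 0 h, κ * Real.cosh a ^ 2 = 1 := by
    have hc : ContinuousOn (fun a => κ * Real.cosh a ^ 2) (Set.Icc 0 h) := by fun_prop
    have := intermediate_value_Ioo hh.le hc
    apply this
    simp only [Real.cosh_zero]
    constructor
    · linarith
    · have e2 : 1 - m ^ 2 = 1 / Real.cosh h ^ 2 := by
        rw [← cw_one_sub_sq, ← hroot]
      rw [e2, div_lt_iff₀ (by have := Real.cosh_pos h; positivity)] at hκv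
      exact hκv
  have hH0 : H 0 = 0 := by simp [hH]
  have hHneg : H (-(β * m)) < 0 := by
    simp only [hH, ← hh_def]
    rw [div_lt_iff₀ (by positivity)] at hκq
    simp
    linarith
  obtain ⟨b, hb1, hb2, hb3, hb4⟩ : ∃ b, β < b ∧ κ * b < 1 ∧ b * m - h < a ∧ H (-(b * m)) < 0 := by
    have c1 : ∀ᶠ b in 𝓝 β, κ * b < 1 :=
      (show Continuous fun b : ℝ => κ * b by fun_prop).continuousAt.eventually_lt_const hκβ
    have c2 : ∀ᶠ b in 𝓝 β, b * m - h < a :=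
      (show Continuous fun b : ℝ => b * m - h by fun_prop).continuousAt.eventually_lt_const
        (by show β * m - h < a; linarith)
    have c3 : ∀ᶠ b in 𝓝 β, H (-(b * m)) < 0 :=
      (show Continuous fun b : ℝ => H (-(b * m)) by fun_prop).continuousAt.eventually_lt_const
        hHneg
    have c4 := (c1.and (c2.and c3)).filter_mono (nhdsWithin_le_nhds (s := Set.Ioi β))
    obtain ⟨b, hb, hb'⟩ := (c4.and self_mem_nhdsWithin).exists
    exact ⟨b, hb', hb.1, hb.2.1, hb.2.2⟩
  have hconc : ConcaveOn ℝ (Set.Ici (a - h)) H := by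
    apply concaveOn_of_deriv2_nonpos (convex_Ici _) hHc.continuousOn hHdiff.differentiableOn
      hH'diff.differentiableOn
    intro u hu
    rw [interior_Ici] at hu
    have hu : a - h < u := hu
    rw [hddH, sub_nonpos, div_le_iff₀ (by have := Real.cosh_pos (h + u); positivity), ← ha]
    have : Real.cosh a ≤ Real.cosh (h + u) := by
      rw [Real.cosh_le_cosh, abs_of_pos ha0, abs_of_pos (by linarith)]; linarith
    have := Real.cosh_pos a
    gcongr
  have hright : ∀ u, a - h ≤ u → H u ≤ 0 := by
    intro u hu
    have hmax : IsMaxOn H (Set.Ici (a - h)) 0 := by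
      apply IsMaxOn.of_isLocalMaxOn_of_concaveOn (by simp; linarith) _ hconc
      apply IsLocalMax.on
      have hds : deriv^[2] H 0 < 0 := by
        rw [hddH, add_zero]
        rw [← cw_one_sub_sq, ← hroot]; linarith
      exact isLocalMax_of_deriv_deriv_neg hds (by rw [hdH]; simp [← hroot]) hHc.continuousAt
    have := hmax (Set.mem_Ici.2 hu)
    simpa [hH0] using this
  have hconv : ConvexOn ℝ (Set.Icc (-(b * m)) (a - h)) H := by
    apply convexOn_of_deriv2_nonneg (convex_Icc _ _) hHc.continuousOn hHdiff.differentiableOn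
      hH'diff.differentiableOn
    intro u hu
    rw [interior_Icc] at hu
    obtain ⟨hu1, hu2⟩ := hu
    rw [hddH, sub_nonneg, le_div_iff₀ (by have := Real.cosh_pos (h + u); positivity), ← ha]
    have : Real.cosh (h + u) ≤ Real.cosh a := by
      rw [Real.cosh_le_cosh, abs_of_pos ha0, abs_le]; constructor <;> linarith
    have := Real.cosh_pos (h + u)
    gcongr
  refine ⟨κ, b, hκ0, hb1, hb2, fun u hu => ?_⟩
  suffices H u ≤ 0 by simp only [hH] at this; linarith
  rcases le_total (a - h) u with h1 | h1
  · exact hright u h1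
  · have hab : -(b * m) ≤ a - h := hu.trans h1
    have := hconv.le_max_of_mem_Icc (Set.left_mem_Icc.2 hab) (Set.right_mem_Icc.2 hab) ⟨hu, h1⟩
    exact this.trans (max_le hb4.le (hright _ le_rfl))

/-- Spin value of a boolean. -/
def cwpm (b : Bool) : ℝ := if b then 1 else -1

/-- Tilted single-spin probability. -/
def cwp (h : ℝ) (b : Bool) : ℝ := Real.exp (h * cwpm b) / (2 * Real.cosh h)

/-- Tilted product probability. -/
def cwP (h : ℝ) {n : ℕ} (s : Fin n → Bool) : ℝ := ∏ i, cwp h (s i)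

/-- Total spin. -/
def cwS {n : ℕ} (s : Fin n → Bool) : ℝ := ∑ i, cwpm (s i)

/-- Normalized total spin. -/
def cwW (m : ℝ) {n : ℕ} (s : Fin n → Bool) : ℝ := (√(n : ℝ))⁻¹ * ∑ i, (cwpm (s i) - m)

lemma cwp_pos (h : ℝ) (b : Bool) : 0 < cwp h b := by
  have := Real.cosh_pos h
  unfold cwp; positivity

lemma cwP_pos (h : ℝ) {n : ℕ} (s : Fin n → Bool) : 0 < cwP h s :=
  Finset.prod_pos fun _ _ => cwp_pos h _

lemma cwp_sum (h : ℝ) : cwp h true + cwp h false = 1 := by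
  have hc := Real.cosh_pos h
  have := Real.cosh_eq h
  simp only [cwp, cwpm]
  rw [← add_div, div_eq_one_iff_eq (by positivity)]
  simp; linarith

lemma cwp_diff (h : ℝ) : cwp h true - cwp h false = Real.tanh h := by
  have hc := Real.cosh_pos h
  have := Real.sinh_eq h
  simp only [cwp, cwpm]
  rw [Real.tanh_eq_sinh_div_cosh, ← sub_div, div_eq_div_iff (by positivity) (by positivity)]
  simp
  rw [this]; ring

lemma cw_sum_prod {R : Type*} [CommSemiring R] (n : ℕ) (f : Bool → R) :
    ∑ s : Fin n → Bool, ∏ i, f (s i) = (f true + f false) ^ n := by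
  have := (Finset.prod_univ_sum (fun _ : Fin n => (Finset.univ : Finset Bool))
    (fun _ b => f b)).symm
  rw [Fintype.piFinset_univ] at this
  rw [this]; simp

lemma cwP_sum (h : ℝ) (n : ℕ) : ∑ s : Fin n → Bool, cwP h s = 1 := by
  have := cw_sum_prod n (cwp h)
  rw [cwp_sum, one_pow] at this
  exact this

lemma cwW_eq (m : ℝ) {n : ℕ} (s : Fin n → Bool) :
    cwW m s = (√(n : ℝ))⁻¹ * (cwS s - n * m) := by
  simp [cwW, cwS, Finset.sum_sub_distrib]

lemma cw_mgf (h m : ℝ) (n : ℕ) (t : ℝ) :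
    ∑ s : Fin n → Bool, cwP h s * Real.exp (t * cwW m s) =
      (Real.cosh (h + (√(n : ℝ))⁻¹ * t) / Real.cosh h * Real.exp (-(m * ((√(n : ℝ))⁻¹ * t)))) ^ n := by
  set u := (√(n : ℝ))⁻¹ * t with hu
  have e : ∀ s : Fin n → Bool, cwP h s * Real.exp (t * cwW m s) =
      ∏ i, (cwp h (s i) * Real.exp (u * (cwpm (s i) - m))) := by
    intro s
    rw [Finset.prod_mul_distrib, ← Real.exp_sum, ← Finset.mul_sum, cwP, cwW]
    congr 2
    rw [hu]; ring
  simp_rw [e]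
  rw [cw_sum_prod n fun b => cwp h b * Real.exp (u * (cwpm b - m))]
  congr 1
  have hc := Real.cosh_pos h
  simp only [cwp, cwpm]
  simp
  rw [Real.cosh_eq (h + u), div_mul_eq_mul_div, div_mul_eq_mul_div, div_mul_eq_mul_div,
    ← Real.exp_add, ← Real.exp_add, ← add_div, div_eq_div_iff (by positivity) (by positivity)]
  have e1 : Real.exp (h + u * (1 - m)) = Real.exp (h + u) * Real.exp (-(m * u)) := by
    rw [← Real.exp_add]; ring_nf
  have e2 : Real.exp (-h + u * (-1 - m)) = Real.exp (-(h + u)) * Real.exp (-(m * u)) := by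
    rw [← Real.exp_add]; ring_nf
  rw [e1, e2]
  ring

lemma cw_mgf_le {h m κ b : ℝ} (hkey : ∀ u : ℝ, -(b * m) ≤ u →
      Real.log (Real.cosh (h + u)) - Real.log (Real.cosh h) - m * u ≤ κ * u ^ 2 / 2)
    {n : ℕ} (hn : 0 < n) {t : ℝ} (ht : -(b * m) * √(n : ℝ) ≤ t) :
    ∑ s : Fin n → Bool, cwP h s * Real.exp (t * cwW m s) ≤ Real.exp (κ * t ^ 2 / 2) := by
  rw [cw_mgf]
  have hn' : (0 : ℝ) < n := by exact_mod_cast hn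
  have hs : 0 < √(n : ℝ) := Real.sqrt_pos.2 hn'
  set u := (√(n : ℝ))⁻¹ * t with hu
  have hu1 : -(b * m) ≤ u := by
    rw [hu, inv_mul_eq_div, le_div_iff₀ hs]; exact ht
  have h1 := hkey u hu1
  have e : Real.cosh (h + u) / Real.cosh h * Real.exp (-(m * u)) =
      Real.exp (Real.log (Real.cosh (h + u)) - Real.log (Real.cosh h) - m * u) := by
    rw [sub_eq_add_neg _ (m * u), Real.exp_add, Real.exp_sub, Real.exp_log (Real.cosh_pos _),
      Real.exp_log (Real.cosh_pos _)]
  rw [e, ← Real.exp_nat_mul]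
  apply Real.exp_le_exp.2
  have e2 : κ * t ^ 2 / 2 = n * (κ * u ^ 2 / 2) := by
    rw [hu, mul_pow, inv_pow, Real.sq_sqrt hn'.le]
    field_simp
  rw [e2]
  gcongr

lemma cw_gauss_shift {b : ℝ} (w : ℝ) :
    ∫ v in Set.Ioi w, Real.exp (b * v * w - b * v ^ 2 / 2) =
      Real.exp (b * w ^ 2 / 2) * (√(Real.pi / (b / 2)) / 2) := by
  have e : ∀ v, Real.exp (b * v * w - b * v ^ 2 / 2) =
      (fun v => Real.exp (b * w ^ 2 / 2) * Real.exp (-(b / 2) * v ^ 2)) (v - w) := by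
    intro v
    simp only
    rw [← Real.exp_add]
    congr 1; ring
  simp_rw [e]
  have h2 := integral_gaussian_Ioi (b / 2)
  rw [← h2, ← integral_const_mul]
  rw [← integral_indicator measurableSet_Ioi, ← integral_indicator measurableSet_Ioi]
  rw [← integral_sub_right_eq_self
    ((Set.Ioi (0 : ℝ)).indicator fun v => Real.exp (b * w ^ 2 / 2) * Real.exp (-(b / 2) * v ^ 2)) w]
  congr 1
  ext v
  simp [Set.indicator_apply]

lemma cw_integrable {b : ℝ} (hb : 0 < b) (w : ℝ) :
    Integrable (fun v : ℝ => Real.exp (b * v * w - b * v ^ 2 / 2)) := by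
  have := (((integrable_exp_neg_mul_sq (half_pos hb)).const_mul
    (Real.exp (b * w ^ 2 / 2))).comp_sub_right w)
  refine this.congr (ae_of_all _ fun v => ?_)
  simp only
  rw [← Real.exp_add]
  congr 1; ring

/-- Uniform exponential-square moment bound. -/
lemma cw_moment {h m κ b : ℝ} (hb : 0 < b) (hκb : κ * b < 1) (hkey : ∀ u : ℝ, -(b * m) ≤ u →
      Real.log (Real.cosh (h + u)) - Real.log (Real.cosh h) - m * u ≤ κ * u ^ 2 / 2) :
    ∃ C : ℝ, 0 ≤ C ∧ ∀ n : ℕ, 0 < n →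
      ∑ s : Fin n → Bool, (if 0 < cwS s then cwP h s * Real.exp (b * cwW m s ^ 2 / 2) else 0) ≤ C := by
  set c := √(Real.pi / (b / 2)) / 2 with hc
  have hc0 : 0 < c := by have := Real.pi_pos; positivity
  set D := ∫ v : ℝ, Real.exp (-((b - κ * b ^ 2) / 2) * v ^ 2) with hD
  have hD0 : 0 ≤ D := integral_nonneg fun v => (Real.exp_pos _).le
  have hpos : 0 < (b - κ * b ^ 2) / 2 := by nlinarith
  refine ⟨D / c, by positivity, fun n hn => ?_⟩
  rw [le_div_iff₀ hc0, Finset.sum_mul]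
  have hn' : (0 : ℝ) < n := by exact_mod_cast hn
  have hs : 0 < √(n : ℝ) := Real.sqrt_pos.2 hn'
  have hss : √(n : ℝ) * √(n : ℝ) = n := Real.mul_self_sqrt hn'.le
  set A := Set.Ioi (-(m * √(n : ℝ))) with hA
  have step1 : ∀ s : Fin n → Bool,
      (if 0 < cwS s then cwP h s * Real.exp (b * cwW m s ^ 2 / 2) else 0) * c ≤
      ∫ v in A, cwP h s * Real.exp (b * v * cwW m s - b * v ^ 2 / 2) := by
    intro s
    have hp := cwP_pos h s
    split_ifs with hS
    · rw [integral_const_mul, mul_assoc, ← cw_gauss_shift (b := b) (cwW m s)]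
      apply mul_le_mul_of_nonneg_left _ hp.le
      apply setIntegral_mono_set (cw_integrable hb _).integrableOn
      · exact ae_of_all _ fun v => (Real.exp_pos _).le
      · apply LE.le.eventuallyLE
        apply Set.Ioi_subset_Ioi
        rw [cwW_eq, inv_mul_eq_div, le_div_iff₀ hs]
        have : -(m * √(n : ℝ)) * √(n : ℝ) = -(n * m) := by
          rw [neg_mul, mul_assoc, hss]; ring
        linarith
    · rw [zero_mul]
      exact integral_nonneg fun v => by positivity
  calc _ ≤ ∑ s : Fin n → Bool, ∫ v in A, cwP h s * Real.exp (b * v * cwW m s - b * v ^ 2 / 2) :=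
        Finset.sum_le_sum fun s _ => step1 s
    _ = ∫ v in A, ∑ s : Fin n → Bool, cwP h s * Real.exp (b * v * cwW m s - b * v ^ 2 / 2) := by
        rw [integral_finsetSum]
        exact fun s _ => ((cw_integrable hb _).const_mul _).integrableOn
    _ ≤ ∫ v in A, Real.exp (-((b - κ * b ^ 2) / 2) * v ^ 2) := by
        apply setIntegral_mono_on _ (integrable_exp_neg_mul_sq hpos).integrableOn measurableSet_Ioi
        · intro v hv
          have hv : -(m * √(n : ℝ)) < v := hv
          have h3 := cw_mgf_le hkey hn (t := b * v) (by nlinarith)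
          have e : ∀ s : Fin n → Bool, cwP h s * Real.exp (b * v * cwW m s - b * v ^ 2 / 2) =
            Real.exp (- (b * v ^ 2 / 2)) * (cwP h s * Real.exp (b * v * cwW m s)) := by
            intro s
            rw [sub_eq_add_neg, Real.exp_add]; ring
          simp_rw [e]
          rw [← Finset.mul_sum]
          calc _ ≤ Real.exp (- (b * v ^ 2 / 2)) * Real.exp (κ * (b * v) ^ 2 / 2) := by gcongr
            _ = _ := by rw [← Real.exp_add]; congr 1; ring
        · exact (integrable_finsetSum _ fun s _ =>
            ((cw_integrable hb _).const_mul _)).integrableOn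
    _ ≤ D := by
        apply setIntegral_le_integral (integrable_exp_neg_mul_sq hpos)
        exact ae_of_all _ fun v => (Real.exp_pos _).le


/-- Single spin measure. -/
def cwSpin (h : ℝ) : Measure Bool :=
  ∑ b : Bool, ENNReal.ofReal (cwp h b) • Measure.dirac b

lemma cw_integral_sum {ι Ω E : Type*} [Fintype ι] [MeasurableSpace Ω]
    [NormedAddCommGroup E] [NormedSpace ℝ E] [CompleteSpace E] (w : ι → ℝ) (hw : ∀ i, 0 ≤ w i)
    (x : ι → Ω) (f : Ω → E) (hf : StronglyMeasurable f) :
    ∫ y, f y ∂(∑ i, ENNReal.ofReal (w i) • Measure.dirac (x i)) = ∑ i, w i • f (x i) := by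
  rw [integral_finsetSum_measure]
  · refine Finset.sum_congr rfl fun i _ => ?_
    rw [integral_smul_measure, integral_dirac' _ _ hf, ENNReal.toReal_ofReal (hw i)]
  · intro i _
    refine Integrable.smul_measure ?_ ENNReal.ofReal_ne_top
    refine ⟨hf.aestronglyMeasurable, ?_⟩
    rw [hasFiniteIntegral_iff_enorm, lintegral_dirac' _ hf.enorm]
    exact enorm_lt_top

lemma cw_sum_isProb {ι Ω : Type*} [Fintype ι] [MeasurableSpace Ω]
    (w : ι → ℝ) (hw : ∀ i, 0 ≤ w i) (hs : ∑ i, w i = 1) (x : ι → Ω) :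
    IsProbabilityMeasure (∑ i, ENNReal.ofReal (w i) • Measure.dirac (x i)) := by
  constructor
  simp only [Measure.coe_finsetSum, Finset.sum_apply, Measure.smul_apply, measure_univ,
    smul_eq_mul, mul_one]
  rw [← ENNReal.ofReal_sum_of_nonneg fun i _ => hw i, hs, ENNReal.ofReal_one]

instance cwSpin_isProb (h : ℝ) : IsProbabilityMeasure (cwSpin h) := by
  apply cw_sum_isProb _ (fun b => (cwp_pos h b).le)
  simp [cwp_sum]

/-- Law of the normalized sum under the tilted product measure. -/
def cwLaw (h m : ℝ) (n : ℕ) : Measure ℝ :=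
  ∑ s : Fin n → Bool, ENNReal.ofReal (cwP h s) • Measure.dirac (cwW m s)

instance cwLaw_isProb (h m : ℝ) (n : ℕ) : IsProbabilityMeasure (cwLaw h m n) :=
  cw_sum_isProb _ (fun s => (cwP_pos h s).le) (cwP_sum h n) _

lemma cwLaw_charFun (h m : ℝ) (v : ℝ) (hv : 0 < v) (n : ℕ) (t : ℝ) :
    charFun (cwLaw h m n) t =
      (charFun ((cwSpin h).map (fun b => (cwpm b - m) / √v)) ((√(n : ℝ))⁻¹ * (√v * t))) ^ n := by
  have hv' : √v ≠ 0 := (Real.sqrt_pos.2 hv).ne'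
  rw [charFun_apply_real, charFun_apply_real, cwLaw, integral_map (by fun_prop) (by fun_prop),
    cwSpin]
  rw [cw_integral_sum _ (fun s => (cwP_pos h s).le) _ _ (by fun_prop),
    cw_integral_sum _ (fun b => (cwp_pos h b).le) _ _ (by fun_prop)]
  rw [Fintype.sum_bool, ← cw_sum_prod n (fun b => cwp h b • Complex.exp
    (((√(n : ℝ))⁻¹ * (√v * t) : ℝ) * ((cwpm b - m) / √v : ℝ) * Complex.I))]
  refine Finset.sum_congr rfl fun s _ => ?_
  simp only [Complex.real_smul]
  rw [Finset.prod_mul_distrib, ← Complex.exp_sum, cwP, cwW]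
  push_cast
  congr 2
  rw [Finset.mul_sum, Finset.mul_sum, Finset.sum_mul]
  refine Finset.sum_congr rfl fun i _ => ?_
  have : (√v : ℂ) ≠ 0 := by exact_mod_cast hv'
  field_simp

lemma cw_clt {h m : ℝ} (hm : m = Real.tanh h) (g : BoundedContinuousFunction ℝ ℝ) :
    Tendsto (fun n : ℕ => ∑ s : Fin n → Bool, cwP h s * g (cwW m s)) atTop
      (𝓝 (∫ x, g x ∂(gaussianReal 0 (Real.toNNReal (1 - m ^ 2))))) := by
  have hv : 0 < 1 - m ^ 2 := by
    rw [hm, cw_one_sub_sq]; have := Real.cosh_pos h; positivity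
  set v := 1 - m ^ 2 with hvdef
  have hsum := cwp_sum h
  have hdiff := cwp_diff h
  rw [← hm] at hdiff
  have hpt : cwp h true = (1 + m) / 2 := by linarith
  have hpf : cwp h false = (1 - m) / 2 := by linarith
  have key : Tendsto (β := ProbabilityMeasure ℝ) (fun n : ℕ => ⟨cwLaw h m n, cwLaw_isProb h m n⟩)
      atTop (𝓝 ⟨gaussianReal 0 (Real.toNNReal v), inferInstance⟩) := by
    apply ProbabilityMeasure.tendsto_of_tendsto_charFun
    intro t
    have h1 := tendsto_charFun_inv_sqrt_mul_pow (P := cwSpin h)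
      (X := fun b => (cwpm b - m) / √v) (by fun_prop) ?_ ?_ (√v * t)
    · have e : charFun (gaussianReal 0 (Real.toNNReal v)) t =
          Complex.exp (-((√v * t : ℝ) : ℂ) ^ 2 / 2) := by
        rw [charFun_gaussianReal, Real.coe_toNNReal _ hv.le]
        congr 1
        have : ((√v : ℝ) : ℂ) ^ 2 = v := by exact_mod_cast Real.sq_sqrt hv.le
        push_cast
        rw [mul_pow, this]
        ring
      show Tendsto (fun n => charFun (cwLaw h m n) t) atTop
        (𝓝 (charFun (gaussianReal 0 (Real.toNNReal v)) t))
      rw [e]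
      simp_rw [cwLaw_charFun h m v hv]
      exact h1
    · rw [cwSpin, cw_integral_sum _ (fun b => (cwp_pos h b).le) _ _ (by fun_prop)]
      simp [hpt, hpf, cwpm]
      ring
    · rw [cwSpin, cw_integral_sum _ (fun b => (cwp_pos h b).le) _ _ (by fun_prop)]
      simp [hpt, hpf, cwpm, div_pow, Real.sq_sqrt hv.le]
      field_simp
      rw [hvdef]; ring
  have := ProbabilityMeasure.tendsto_iff_forall_integral_tendsto.1 key g
  refine this.congr fun n => ?_
  show ∫ x, g x ∂(cwLaw h m n) = _
  rw [cwLaw, cw_integral_sum _ (fun s => (cwP_pos h s).le) _ _ g.continuous.stronglyMeasurable]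
  rfl

lemma cw_gauss_tilt {β v : ℝ} (hv : 0 < v) (hβv : β * v < 1) (F : ℝ → ℝ) :
    ∫ x, F x * Real.exp (β * x ^ 2 / 2) ∂(gaussianReal 0 (Real.toNNReal v)) =
      √(1 / (1 - β * v)) * ∫ x, F x ∂(gaussianReal 0 (Real.toNNReal (v / (1 - β * v)))) := by
  have h1 : 0 < 1 - β * v := by linarith
  have hσ : 0 < v / (1 - β * v) := by positivity
  rw [integral_gaussianReal_eq_integral_smul (by simpa using hv),
    integral_gaussianReal_eq_integral_smul (by simpa using hσ), ← integral_const_mul]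
  congr 1
  ext x
  simp only [gaussianPDFReal, smul_eq_mul, Real.coe_toNNReal _ hv.le, Real.coe_toNNReal _ hσ.le,
    sub_zero]
  have e1 : Real.exp (-x ^ 2 / (2 * (v / (1 - β * v)))) =
      Real.exp (-x ^ 2 / (2 * v)) * Real.exp (β * x ^ 2 / 2) := by
    rw [← Real.exp_add]; congr 1; field_simp; ring
  have e2 : (√(2 * Real.pi * v))⁻¹ =
      √(1 / (1 - β * v)) * (√(2 * Real.pi * (v / (1 - β * v))))⁻¹ := by
    have : 2 * Real.pi * (v / (1 - β * v)) = (2 * Real.pi * v) * (1 / (1 - β * v)) := by ring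
    rw [this, Real.sqrt_mul (x := 2 * Real.pi * v) (by have := Real.pi_pos; positivity)]
    have : √(1 / (1 - β * v)) ≠ 0 := (Real.sqrt_pos.2 (by positivity)).ne'
    rw [mul_inv, mul_comm _ (√(1 / (1 - β * v)))⁻¹, ← mul_assoc, mul_inv_cancel₀ this, one_mul]
  rw [e1, e2]
  ring

/-- Cutoff. -/
def cwCut (K : ℕ) (x : ℝ) : ℝ := max 0 (min 1 ((K : ℝ) + 1 - |x|))

lemma cwCut_continuous (K : ℕ) : Continuous (cwCut K) := by unfold cwCut; fun_prop

lemma cwCut_nonneg (K : ℕ) (x : ℝ) : 0 ≤ cwCut K x := le_max_left _ _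

lemma cwCut_le_one (K : ℕ) (x : ℝ) : cwCut K x ≤ 1 :=
  max_le zero_le_one (min_le_left _ _)

lemma cwCut_eq_one {K : ℕ} {x : ℝ} (hx : |x| ≤ K) : cwCut K x = 1 := by
  unfold cwCut; rw [min_eq_left (by linarith)]; simp

lemma cwCut_eq_zero {K : ℕ} {x : ℝ} (hx : (K : ℝ) + 1 ≤ |x|) : cwCut K x = 0 := by
  unfold cwCut; exact max_eq_left ((min_le_right _ _).trans (by linarith))

/-- The unnormalized conditional expectation. -/
def cwB (β m : ℝ) (n : ℕ) (g : ℝ → ℝ) : ℝ :=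
  ∑ s : Fin n → Bool, if 0 < cwS s then
    cwP (β * m) s * (g (cwW m s) * Real.exp (β * cwW m s ^ 2 / 2)) else 0

lemma cwB_tendsto {β m : ℝ} (hβ : 1 < β) (hm : 0 < m) (hroot : m = Real.tanh (β * m))
    (g : BoundedContinuousFunction ℝ ℝ) :
    Tendsto (fun n => cwB β m n g) atTop (𝓝 (√(1 / (1 - β * (1 - m ^ 2))) *
      ∫ x, g x ∂(gaussianReal 0 (Real.toNNReal ((1 - m ^ 2) / (1 - β * (1 - m ^ 2))))))) := by
  have hv : 0 < 1 - m ^ 2 := by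
    rw [hroot, cw_one_sub_sq]; have := Real.cosh_pos (β * m); positivity
  have hβv := cw_var_lt hβ hm hroot
  obtain ⟨κ, b, hκ, hb, hκb, hkey⟩ := cw_key hβ hm hroot
  obtain ⟨C, hC0, hC⟩ := cw_moment (by linarith : 0 < b) hκb hkey
  set v := 1 - m ^ 2 with hvdef
  set c := √(1 / (1 - β * v)) with hc
  set γ := gaussianReal 0 (Real.toNNReal (v / (1 - β * v))) with hγ
  have hM : ∀ x, |g x| ≤ ‖g‖ := fun x => g.norm_coe_le_norm x
  -- truncated limit
  have hlimK : ∀ K : ℕ, Tendsto (fun n : ℕ => ∑ s : Fin n → Bool, cwP (β * m) s *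
      (g (cwW m s) * cwCut K (cwW m s) * Real.exp (β * cwW m s ^ 2 / 2))) atTop
      (𝓝 (c * ∫ x, g x * cwCut K x ∂γ)) := by
    intro K
    have hcont : Continuous fun x : ℝ => g x * cwCut K x * Real.exp (β * x ^ 2 / 2) := by
      have := cwCut_continuous K
      fun_prop
    have hbd : ∀ x : ℝ, ‖g x * cwCut K x * Real.exp (β * x ^ 2 / 2)‖ ≤
        ‖g‖ * Real.exp (β * ((K : ℝ) + 1) ^ 2 / 2) := by
      intro x
      rcases le_total ((K : ℝ) + 1) |x| with h1 | h1
      · rw [cwCut_eq_zero h1]; simp; positivity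
      · rw [Real.norm_eq_abs, abs_mul, abs_mul, Real.abs_exp, abs_of_nonneg (cwCut_nonneg K x)]
        have hx2 : x ^ 2 ≤ ((K : ℝ) + 1) ^ 2 := by
          rw [← sq_abs x]; gcongr
        have : |g x| * cwCut K x ≤ ‖g‖ := by
          have := mul_le_mul (hM x) (cwCut_le_one K x) (cwCut_nonneg K x) (norm_nonneg _)
          linarith
        gcongr
    have := cw_clt hroot (BoundedContinuousFunction.ofNormedAddCommGroup _ hcont _ hbd)
    simp only [BoundedContinuousFunction.coe_ofNormedAddCommGroup] at this
    rw [← hvdef, cw_gauss_tilt hv hβv] at this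
    exact this
  have hlim2 : Tendsto (fun K : ℕ => c * ∫ x, g x * cwCut K x ∂γ) atTop (𝓝 (c * ∫ x, g x ∂γ)) := by
    apply Tendsto.const_mul
    apply tendsto_integral_of_dominated_convergence (fun _ => ‖g‖)
    · intro K
      have := cwCut_continuous K
      exact (show Continuous fun x => g x * cwCut K x by fun_prop).aestronglyMeasurable
    · exact integrable_const _
    · intro K
      refine ae_of_all _ fun x => ?_
      rw [Real.norm_eq_abs, abs_mul, abs_of_nonneg (cwCut_nonneg K x)]
      have := mul_le_mul (hM x) (cwCut_le_one K x) (cwCut_nonneg K x) (norm_nonneg _)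
      linarith
    · refine ae_of_all _ fun x => ?_
      apply tendsto_const_nhds.congr'
      obtain ⟨N, hN⟩ := exists_nat_ge |x|
      filter_upwards [eventually_ge_atTop N] with K hK
      rw [cwCut_eq_one (hN.trans (by exact_mod_cast hK)), mul_one]
  have hlim3 : Tendsto (fun K : ℕ => ‖g‖ * Real.exp (-((b - β) / 2 * (K : ℝ) ^ 2)) * C) atTop
      (𝓝 0) := by
    have h1 : Tendsto (fun K : ℕ => Real.exp (-((b - β) / 2 * (K : ℝ) ^ 2))) atTop (𝓝 0) := by
      apply Real.tendsto_exp_neg_atTop_nhds_zero.comp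
      apply Tendsto.const_mul_atTop (by linarith)
      exact (tendsto_pow_atTop two_ne_zero).comp tendsto_natCast_atTop_atTop
    have := (h1.const_mul ‖g‖).mul_const C
    simpa using this
  have herr : ∀ K : ℕ, ∀ᶠ n : ℕ in atTop, |cwB β m n g - ∑ s : Fin n → Bool, cwP (β * m) s *
      (g (cwW m s) * cwCut K (cwW m s) * Real.exp (β * cwW m s ^ 2 / 2))| ≤
      ‖g‖ * Real.exp (-((b - β) / 2 * (K : ℝ) ^ 2)) * C := by
    intro K
    have hsq : Tendsto (fun n : ℕ => m * √(n : ℝ)) atTop atTop :=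
      Tendsto.const_mul_atTop hm (Real.tendsto_sqrt_atTop.comp tendsto_natCast_atTop_atTop)
    filter_upwards [hsq.eventually_ge_atTop ((K : ℝ) + 1), eventually_gt_atTop 0] with n hn hn0
    have hn' : (0 : ℝ) < n := by exact_mod_cast hn0
    have hs : 0 < √(n : ℝ) := Real.sqrt_pos.2 hn'
    have hss : √(n : ℝ) * √(n : ℝ) = n := Real.mul_self_sqrt hn'.le
    rw [cwB, ← Finset.sum_sub_distrib]
    refine (Finset.abs_sum_le_sum_abs _ _).trans ?_
    refine le_trans ?_ (mul_le_mul_of_nonneg_left (hC n hn0) (by positivity))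
    rw [Finset.mul_sum]
    refine Finset.sum_le_sum fun s _ => ?_
    have hp := cwP_pos (β * m) s
    set w := cwW m s with hw
    split_ifs with hS
    · have e : cwP (β * m) s * (g w * Real.exp (β * w ^ 2 / 2)) -
        cwP (β * m) s * (g w * cwCut K w * Real.exp (β * w ^ 2 / 2)) =
        cwP (β * m) s * (g w * ((1 - cwCut K w) * Real.exp (β * w ^ 2 / 2))) := by ring
      rw [e, abs_mul, abs_of_pos hp, abs_mul,
        abs_of_nonneg (mul_nonneg (sub_nonneg.2 (cwCut_le_one K w)) (Real.exp_pos _).le)]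
      have h2 : (1 - cwCut K w) * Real.exp (β * w ^ 2 / 2) ≤
          Real.exp (-((b - β) / 2 * (K : ℝ) ^ 2)) * Real.exp (b * w ^ 2 / 2) := by
        rcases le_total |w| K with h3 | h3
        · rw [cwCut_eq_one h3]; simp; positivity
        · have hK2 : (K : ℝ) ^ 2 ≤ w ^ 2 := by rw [← sq_abs w]; gcongr
          calc _ ≤ 1 * Real.exp (β * w ^ 2 / 2) := by
                gcongr; linarith [cwCut_nonneg K w]
            _ ≤ _ := by
                rw [one_mul, ← Real.exp_add]
                apply Real.exp_le_exp.2
                nlinarith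
      calc _ ≤ cwP (β * m) s * (‖g‖ *
            (Real.exp (-((b - β) / 2 * (K : ℝ) ^ 2)) * Real.exp (b * w ^ 2 / 2))) := by
            have h0 : 0 ≤ (1 - cwCut K w) * Real.exp (β * w ^ 2 / 2) :=
              mul_nonneg (sub_nonneg.2 (cwCut_le_one K w)) (Real.exp_pos _).le
            exact mul_le_mul_of_nonneg_left
              (mul_le_mul (hM w) h2 h0 (norm_nonneg _)) hp.le
        _ = _ := by ring
    · have hwle : (K : ℝ) + 1 ≤ |w| := by
        have : w ≤ -(m * √(n : ℝ)) := by
          rw [hw, cwW_eq, inv_mul_eq_div, div_le_iff₀ hs]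
          have : -(m * √(n : ℝ)) * √(n : ℝ) = -(n * m) := by
            rw [neg_mul, mul_assoc, hss]; ring
          linarith [not_lt.1 hS]
        have := neg_le_abs w
        linarith
      rw [cwCut_eq_zero hwle]
      simp
  rw [Metric.tendsto_atTop']
  intro ε hε
  have ev1 := (Metric.tendsto_nhds.1 hlim2) (ε / 3) (by positivity)
  have ev2 := hlim3.eventually_lt_const (show (0 : ℝ) < ε / 3 by positivity)
  obtain ⟨K, hK1, hK2⟩ := (ev1.and ev2).exists
  have ev3 := (Metric.tendsto_nhds.1 (hlimK K)) (ε / 3) (by positivity)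
  obtain ⟨N, hN⟩ := eventually_atTop.1 (ev3.and (herr K))
  refine ⟨N, fun n hn => ?_⟩
  obtain ⟨h3, h4⟩ := hN n hn.le
  rw [Real.dist_eq] at *
  rw [abs_lt] at *
  rw [abs_le] at h4
  constructor <;> linarith [h3.1, h3.2, h4.1, h4.2, hK1.1, hK1.2]


lemma cw_sampleMean {n : ℕ} (s : Fin n → Bool) : sampleMean (pmVec s) = cwS s / n := by
  simp [sampleMean, cwS, pmVec, cwpm]

lemma cw_quad {n : ℕ} (s : Fin n → Bool) :
    pmVec s ⬝ᵥ (QCW n).mulVec (pmVec s) = (n : ℝ)⁻¹ * (cwS s ^ 2 - n) := by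
  have h1 : ∀ i, (QCW n).mulVec (pmVec s) i = (n : ℝ)⁻¹ * (cwS s - pmVec s i) := by
    intro i
    have e : ∀ j, QCW n i j * pmVec s j =
        (n : ℝ)⁻¹ * pmVec s j - if i = j then (n : ℝ)⁻¹ * pmVec s j else 0 := by
      intro j
      by_cases h : i = j <;> simp [QCW, h]
    simp only [Matrix.mulVec, dotProduct, e]
    rw [Finset.sum_sub_distrib, ← Finset.mul_sum, Finset.sum_ite_eq]
    rw [if_pos (Finset.mem_univ i), mul_sub]
    rfl
  have h2 : ∀ i, pmVec s i * pmVec s i = 1 := by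
    intro i; by_cases h : s i <;> simp [pmVec, h]
  simp only [dotProduct, h1]
  have e : ∀ i, pmVec s i * ((n : ℝ)⁻¹ * (cwS s - pmVec s i)) =
      (n : ℝ)⁻¹ * (pmVec s i * cwS s - 1) := by
    intro i; rw [← h2 i]; ring
  simp only [e]
  rw [← Finset.mul_sum, Finset.sum_sub_distrib, ← Finset.sum_mul]
  simp [pow_two]
  left; left; rfl

lemma cw_weight {β m : ℝ} {n : ℕ} (hn : 0 < n) (s : Fin n → Bool) :
    isingWeight β (QCW n) (pmVec s) =
      (Real.exp (-(β / 2) - n * β * m ^ 2 / 2) * (2 * Real.cosh (β * m)) ^ n) *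
        (cwP (β * m) s * Real.exp (β * cwW m s ^ 2 / 2)) := by
  have hn' : (0 : ℝ) < n := by exact_mod_cast hn
  have hc := Real.cosh_pos (β * m)
  have e : cwP (β * m) s = Real.exp (β * m * cwS s) / (2 * Real.cosh (β * m)) ^ n := by
    simp only [cwP, cwp, cwS]
    rw [Finset.prod_div_distrib, ← Real.exp_sum, Finset.mul_sum]
    simp
  rw [isingWeight, cw_quad, e]
  have e2 : Real.exp (-(β / 2) - n * β * m ^ 2 / 2) * (2 * Real.cosh (β * m)) ^ n *
      (Real.exp (β * m * cwS s) / (2 * Real.cosh (β * m)) ^ n * Real.exp (β * cwW m s ^ 2 / 2)) =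
      Real.exp (-(β / 2) - n * β * m ^ 2 / 2) * Real.exp (β * m * cwS s) *
        Real.exp (β * cwW m s ^ 2 / 2) := by
    field_simp
  rw [e2, ← Real.exp_add, ← Real.exp_add]
  congr 1
  rw [cwW_eq, mul_pow, inv_pow, Real.sq_sqrt hn'.le]
  field_simp
  ring

lemma cw_sampleMean_measurable (n : ℕ) : Measurable (fun x : Fin n → ℝ => sampleMean x) := by
  unfold sampleMean; fun_prop

lemma cw_cond_integral (β m : ℝ) {n : ℕ} (hn : 0 < n) (f : BoundedContinuousFunction ℝ ℝ) :
    ∫ x, f x ∂(Measure.map (fun x : Fin n → ℝ => Real.sqrt n * (sampleMean x - m))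
        (ProbabilityTheory.cond (isingMeasure (Fin n) β (QCW n)) {x | 0 < sampleMean x})) =
      cwB β m n f / cwB β m n (fun _ => 1) := by
  have hn' : (0 : ℝ) < n := by exact_mod_cast hn
  have hs : 0 < √(n : ℝ) := Real.sqrt_pos.2 hn'
  have hss : √(n : ℝ) * √(n : ℝ) = n := Real.mul_self_sqrt hn'.le
  have hmeas := cw_sampleMean_measurable n
  set A : Set (Fin n → ℝ) := {x | 0 < sampleMean x} with hA
  have hAm : MeasurableSet A := measurableSet_lt measurable_const hmeas
  set Z := isingZ (Fin n) β (QCW n) with hZ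
  have hZpos : 0 < Z := by
    rw [hZ, isingZ]
    exact Finset.sum_pos (fun s _ => Real.exp_pos _) Finset.univ_nonempty
  set D := Real.exp (-(β / 2) - n * β * m ^ 2 / 2) * (2 * Real.cosh (β * m)) ^ n with hD
  have hD0 : 0 < D := by have := Real.cosh_pos (β * m); positivity
  have hmemA : ∀ s : Fin n → Bool, pmVec s ∈ A ↔ 0 < cwS s := by
    intro s
    rw [hA, Set.mem_ofPred_eq, cw_sampleMean, div_pos_iff_of_pos_right hn']
  have hT : ∀ s : Fin n → Bool, √(n : ℝ) * (sampleMean (pmVec s) - m) = cwW m s := by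
    intro s
    rw [cw_sampleMean, cwW_eq]
    field_simp
    rw [Real.sq_sqrt hn'.le]
  have main : ∀ g : BoundedContinuousFunction ℝ ℝ,
      ∫ x in A, g (√(n : ℝ) * (sampleMean x - m)) ∂(isingMeasure (Fin n) β (QCW n)) =
        D / Z * cwB β m n g := by
    intro g
    have hg : Measurable fun x : Fin n → ℝ => g (√(n : ℝ) * (sampleMean x - m)) :=
      g.continuous.measurable.comp ((hmeas.sub_const m).const_mul _)
    rw [← integral_indicator hAm, isingMeasure,
      cw_integral_sum (fun s : Fin n → Bool => isingWeight β (QCW n) (pmVec s) /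
        isingZ (Fin n) β (QCW n)) (fun s => div_nonneg (Real.exp_pos _).le hZpos.le) _ _
        (hg.indicator hAm).stronglyMeasurable, cwB, Finset.mul_sum]
    refine Finset.sum_congr rfl fun s _ => ?_
    rw [Set.indicator_apply]
    simp only [hmemA, hT]
    split_ifs with h
    · rw [cw_weight (m := m) hn, ← hD, ← hZ, smul_eq_mul]; ring
    · simp
  have hone := main (BoundedContinuousFunction.const ℝ 1)
  simp only [BoundedContinuousFunction.const_apply, integral_const, smul_eq_mul, mul_one,
    measureReal_restrict_apply_univ] at hone
  rw [integral_map ((hmeas.sub_const m).const_mul _).aemeasurable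
    f.continuous.aestronglyMeasurable, ProbabilityTheory.cond, integral_smul_measure, main f,
    ENNReal.toReal_inv]
  have : ((isingMeasure (Fin n) β (QCW n)) A).toReal = D / Z * cwB β m n (fun _ => 1) := hone
  rw [this, smul_eq_mul]
  have hDZ : D / Z ≠ 0 := (div_pos hD0 hZpos).ne'
  rw [mul_inv, div_eq_mul_inv]
  field_simp

/-- **(Curie–Weiss CLT, supercritical `β > 1`).** If `X ~ P_{β,Q^{CW}}` with `β > 1` and `m`
is the unique positive root of `m = tanh(βm)`, then conditionally on `{X̄ₙ > 0}`,
`√n (X̄ₙ - m) →d N(0, (1-m²)/(1-β(1-m²)))`. -/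
theorem curieWeiss_clt_supercritical (β : ℝ) (hβ : 1 < β) (m : ℝ) (hm : 0 < m)
    (hroot : m = Real.tanh (β * m)) :
    TendstoInDistribution
      (fun n => Measure.map (fun x : Fin n → ℝ => Real.sqrt n * (sampleMean x - m))
        (ProbabilityTheory.cond (isingMeasure (Fin n) β (QCW n)) {x | 0 < sampleMean x}))
      (gaussianReal 0 (Real.toNNReal ((1 - m ^ 2) / (1 - β * (1 - m ^ 2))))) := by
  intro f
  have hβv := cw_var_lt hβ hm hroot
  have h1 := cwB_tendsto hβ hm hroot f
  have h2 := cwB_tendsto hβ hm hroot (BoundedContinuousFunction.const ℝ 1)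
  have hc : 0 < √(1 / (1 - β * (1 - m ^ 2))) := by
    apply Real.sqrt_pos.2
    have : 0 < 1 - β * (1 - m ^ 2) := by linarith
    positivity
  have e2 : ∫ x, (BoundedContinuousFunction.const ℝ (1 : ℝ)) x
      ∂(gaussianReal 0 (Real.toNNReal ((1 - m ^ 2) / (1 - β * (1 - m ^ 2))))) = 1 := by
    simp
  rw [e2, mul_one] at h2
  have h3 := h1.div h2 hc.ne'
  rw [mul_div_cancel_left₀ _ hc.ne'] at h3
  refine h3.congr' ?_
  filter_upwards [eventually_gt_atTop 0] with n hn
  rw [cw_cond_integral β m hn f]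
  rfl

end
end

section
/- Let β = 1 and for each n let X ~ P_{1,Q^{CW}} be a Curie–Weiss Ising vector on {−1,1}^n. Then n^{1/4} · X̄_n converges in distribution to the random variable Y_0 whose law on R has density proportional to exp(−y⁴/12). -/
open MeasureTheory ProbabilityTheory Filter Topology Matrix

noncomputable section

/-- The law on `ℝ` with density proportional to `exp(-y⁴/12)`. -/
def quarticLaw : Measure ℝ :=
  volume.withDensity fun y =>
    ENNReal.ofReal (Real.exp (-(y ^ 4) / 12) / ∫ u : ℝ, Real.exp (-(u ^ 4) / 12))

lemma cwSum_exp (n : ℕ) (x : ℝ) :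
    ∑ s : Fin n → Bool, Real.exp (x * ∑ i, pmVec s i) = (2 * Real.cosh x) ^ n := by
  have h : (2 * Real.cosh x) ^ n = ∏ _i : Fin n, ∑ b : Bool, Real.exp (x * (if b then 1 else -1)) := by
    simp [Real.cosh_eq]
    ring
  rw [h, Finset.prod_univ_sum]
  simp only [Fintype.piFinset_univ]
  refine Finset.sum_congr rfl fun s _ => ?_
  rw [Finset.mul_sum, Real.exp_sum]
  rfl

lemma cwWeight (n : ℕ) (hn : 0 < n) (s : Fin n → Bool) :
    isingWeight 1 (QCW n) (pmVec s)
      = Real.exp (-(1 / 2)) * Real.exp ((∑ i, pmVec s i) ^ 2 / (2 * n)) := by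
  have hn' : (n : ℝ) ≠ 0 := by positivity
  unfold isingWeight
  rw [← Real.exp_add]
  congr 1
  have h1 : ∀ i, pmVec s i * pmVec s i = 1 := by
    intro i; unfold pmVec; split_ifs <;> norm_num
  have h2 : ∀ i, (QCW n).mulVec (pmVec s) i = (n : ℝ)⁻¹ * (∑ j, pmVec s j) - (n : ℝ)⁻¹ * pmVec s i := by
    intro i
    unfold QCW Matrix.mulVec dotProduct
    rw [Finset.mul_sum, eq_sub_iff_add_eq]
    rw [← Finset.sum_erase_add _ _ (Finset.mem_univ i), ← Finset.sum_erase_add _ (fun j => (n : ℝ)⁻¹ * pmVec s j) (Finset.mem_univ i)]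
    simp only [if_true, zero_mul, add_zero]
    congr 1
    refine Finset.sum_congr rfl fun j hj => ?_
    rw [if_neg (Finset.ne_of_mem_erase hj).symm]
  have h3 : pmVec s ⬝ᵥ (QCW n).mulVec (pmVec s) = (n : ℝ)⁻¹ * (∑ i, pmVec s i) ^ 2 - 1 := by
    unfold dotProduct
    simp_rw [h2]
    have : ∀ i, pmVec s i * ((n : ℝ)⁻¹ * (∑ j, pmVec s j) - (n : ℝ)⁻¹ * pmVec s i)
        = pmVec s i * ((n : ℝ)⁻¹ * (∑ j, pmVec s j)) - (n : ℝ)⁻¹ := by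
      intro i
      linear_combination (-(n : ℝ)⁻¹) * h1 i
    simp_rw [this]
    rw [Finset.sum_sub_distrib, ← Finset.sum_mul]
    simp [hn']
    ring
  rw [h3]
  field_simp
  ring

/-- `e^{-x²/2} cosh x`. -/
def cwq (x : ℝ) : ℝ := Real.exp (-(x ^ 2) / 2) * Real.cosh x

lemma cwq_pos (x : ℝ) : 0 < cwq x := mul_pos (Real.exp_pos _) (Real.cosh_pos _)

lemma cwq_cont : Continuous cwq := by unfold cwq; fun_prop

lemma cwq_bound1 (x : ℝ) : cwq x ≤ Real.exp (-(x ^ 4 / (4 + x ^ 2) ^ 2)) := by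
  set e := Real.exp (-(x ^ 2) / 4) with he
  have he0 : 0 < e := Real.exp_pos _
  have h1 : Real.cosh x = 2 * Real.cosh (x / 2) ^ 2 - 1 := by
    have := Real.cosh_two_mul (x / 2)
    have h2 := Real.cosh_sq (x / 2)
    rw [show 2 * (x / 2) = x by ring] at this
    linarith
  have h2 : Real.cosh (x / 2) ^ 2 ≤ e⁻¹ := by
    have := Real.cosh_le_exp_half_sq (x / 2)
    calc Real.cosh (x / 2) ^ 2 ≤ (Real.exp ((x / 2) ^ 2 / 2)) ^ 2 := by
          gcongr
      _ = e⁻¹ := by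
          rw [he, ← Real.exp_neg, ← Real.exp_nat_mul]; congr 1; push_cast; ring
  have h3 : Real.exp (-(x ^ 2) / 2) = e ^ 2 := by
    rw [he, ← Real.exp_nat_mul]; congr 1; push_cast; ring
  have h4 : cwq x ≤ 1 - (1 - e) ^ 2 := by
    unfold cwq
    rw [h3, h1]
    have : e ^ 2 * Real.cosh (x / 2) ^ 2 ≤ e ^ 2 * e⁻¹ := by gcongr
    have h5 : e ^ 2 * e⁻¹ = e := by field_simp
    nlinarith
  have h6 : e ≤ 4 / (4 + x ^ 2) := by
    have := Real.add_one_le_exp (x ^ 2 / 4)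
    have h7 : e = (Real.exp (x ^ 2 / 4))⁻¹ := by rw [he, ← Real.exp_neg]; congr 1; ring
    rw [h7]
    calc (Real.exp (x ^ 2 / 4))⁻¹ ≤ (x ^ 2 / 4 + 1)⁻¹ := by gcongr
      _ = 4 / (4 + x ^ 2) := by field_simp; try ring
  have h8 : x ^ 4 / (4 + x ^ 2) ^ 2 ≤ (1 - e) ^ 2 := by
    have h9 : x ^ 2 / (4 + x ^ 2) ≤ 1 - e := by
      have : x ^ 2 / (4 + x ^ 2) = 1 - 4 / (4 + x ^ 2) := by field_simp; ring
      linarith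
    calc x ^ 4 / (4 + x ^ 2) ^ 2 = (x ^ 2 / (4 + x ^ 2)) ^ 2 := by rw [div_pow]; ring
      _ ≤ _ := by gcongr
  have := Real.add_one_le_exp (-(x ^ 4 / (4 + x ^ 2) ^ 2))
  linarith

lemma cwq_bound2 (x : ℝ) (hx : 4 ≤ |x|) : cwq x ≤ Real.exp (-(x ^ 2 / 4)) := by
  have h1 : Real.cosh x ≤ Real.exp |x| := by
    rw [← Real.cosh_abs, Real.cosh_eq]
    have : Real.exp (-|x|) ≤ Real.exp |x| := by
      apply Real.exp_le_exp.2; linarith [abs_nonneg x]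
    linarith
  unfold cwq
  calc _ ≤ Real.exp (-(x ^ 2) / 2) * Real.exp |x| := by gcongr
    _ ≤ _ := by
      rw [← Real.exp_add]
      apply Real.exp_le_exp.2
      rw [← sq_abs]
      nlinarith

lemma cwq_dom (n : ℕ) (hn : 0 < n) (a : ℝ) (ha : 0 < a) (han : a ^ 4 = n) (y : ℝ) :
    cwq (y / a) ^ n ≤ Real.exp (1 - y ^ 2 / 10) := by
  have hn1 : (1 : ℝ) ≤ n := by exact_mod_cast hn
  have ha1 : 1 ≤ a ^ 2 := by nlinarith [sq_nonneg a]
  rcases le_total 4 |y / a| with h | h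
  · calc cwq (y / a) ^ n ≤ (Real.exp (-((y / a) ^ 2 / 4))) ^ n := by
          gcongr
          · exact (cwq_pos _).le
          · exact cwq_bound2 _ h
      _ ≤ _ := by
        rw [← Real.exp_nat_mul]
        apply Real.exp_le_exp.2
        rw [← han]
        have : a ^ 4 * -((y / a) ^ 2 / 4) = - (a ^ 2 * y ^ 2 / 4) := by field_simp
        rw [this]
        nlinarith [sq_nonneg y]
  · calc cwq (y / a) ^ n ≤ (Real.exp (-((y / a) ^ 4 / 400))) ^ n := by
          gcongr
          · exact (cwq_pos _).le
          · refine (cwq_bound1 _).trans ?_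
            apply Real.exp_le_exp.2
            have h1 : (y / a) ^ 2 ≤ 16 := by
              rw [← sq_abs]; nlinarith [abs_nonneg (y / a)]
            have : (y / a) ^ 4 / 400 ≤ (y / a) ^ 4 / (4 + (y / a) ^ 2) ^ 2 := by
              gcongr
              nlinarith [sq_nonneg (y / a)]
            linarith
      _ ≤ _ := by
        rw [← Real.exp_nat_mul]
        apply Real.exp_le_exp.2
        rw [← han]
        have : a ^ 4 * -((y / a) ^ 4 / 400) = - (y ^ 4 / 400) := by field_simp
        rw [this]
        nlinarith [sq_nonneg (y ^ 2 / 20 - 1)]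

lemma cwq_taylor :
    (fun x => cwq x - 1 + x ^ 4 / 12) =O[𝓝 0] (fun x : ℝ => x ^ 5) := by
  have key : ∀ c : ℝ, (fun x : ℝ => Real.exp (c * x - x ^ 2 / 2)
      - ∑ i ∈ Finset.range 5, (c * x - x ^ 2 / 2) ^ i / (i.factorial : ℝ)) =O[𝓝 0] (fun x : ℝ => x ^ 5) := by
    intro c
    have ht : Tendsto (fun x : ℝ => c * x - x ^ 2 / 2) (𝓝 0) (𝓝 0) := by
      have : Continuous (fun x : ℝ => c * x - x ^ 2 / 2) := by fun_prop
      simpa using this.tendsto 0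
    refine ((Real.exp_sub_sum_range_isBigO_pow 5).comp_tendsto ht).trans ?_
    have hO : (fun x : ℝ => c * x - x ^ 2 / 2) =O[𝓝 0] (fun x : ℝ => x) := by
      have h1 : (fun x : ℝ => (c - x / 2) * x) =O[𝓝 0] (fun x : ℝ => 1 * x) := by
        refine Asymptotics.IsBigO.mul ?_ (Asymptotics.isBigO_refl _ _)
        have : Continuous (fun x : ℝ => c - x / 2) := by fun_prop
        exact (this.tendsto 0).isBigO_one ℝ
      refine (h1.congr_left ?_).congr_right ?_
      · intro x; ring
      · intro x; ring
    exact hO.pow 5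
  have hs := ((key 1).add (key (-1))).const_mul_left (1 / 2)
  have hp : (fun x : ℝ => (-(1 / 12) * x + x ^ 3 / 384 + x / 8) * x ^ 5) =O[𝓝 0] (fun x : ℝ => 1 * x ^ 5) := by
    refine Asymptotics.IsBigO.mul ?_ (Asymptotics.isBigO_refl _ _)
    have : Continuous (fun x : ℝ => -(1 / 12) * x + x ^ 3 / 384 + x / 8) := by fun_prop
    exact (this.tendsto 0).isBigO_one ℝ
  have hp' := hp.congr_right (g₂ := fun x : ℝ => x ^ 5) (by intro x; ring)
  refine (hs.add hp').congr_left ?_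
  intro x
  unfold cwq
  rw [Real.cosh_eq]
  have e1 : Real.exp (1 * x - x ^ 2 / 2) = Real.exp (-x ^ 2 / 2) * Real.exp x := by
    rw [← Real.exp_add]; congr 1; ring
  have e2 : Real.exp (-1 * x - x ^ 2 / 2) = Real.exp (-x ^ 2 / 2) * Real.exp (-x) := by
    rw [← Real.exp_add]; congr 1; ring
  rw [e1, e2]
  simp only [Finset.sum_range_succ, Finset.sum_range_zero, Nat.factorial]
  push_cast
  ring

lemma cwq_tendsto (y : ℝ) :
    Tendsto (fun n : ℕ => cwq (y / (n : ℝ) ^ ((1 : ℝ) / 4)) ^ n) atTop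
      (𝓝 (Real.exp (-(y ^ 4) / 12))) := by
  have ha : Tendsto (fun n : ℕ => (n : ℝ) ^ ((1 : ℝ) / 4)) atTop atTop :=
    (tendsto_rpow_atTop (by norm_num)).comp tendsto_natCast_atTop_atTop
  have hx : Tendsto (fun n : ℕ => y / (n : ℝ) ^ ((1 : ℝ) / 4)) atTop (𝓝 0) :=
    ha.const_div_atTop y
  have h := cwq_taylor.comp_tendsto hx
  have h1 := (Asymptotics.isBigO_refl (fun n : ℕ => (n : ℝ)) atTop).mul h
  have h2 : Tendsto (fun n : ℕ => (n : ℝ) * (y / (n : ℝ) ^ ((1 : ℝ) / 4)) ^ 5) atTop (𝓝 0) := by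
    have := hx.const_mul (y ^ 4)
    rw [mul_zero] at this
    refine this.congr' ?_
    filter_upwards [eventually_gt_atTop 0] with n hn
    have hn' : (0 : ℝ) < n := by exact_mod_cast hn
    have hp : 0 < (n : ℝ) ^ ((1 : ℝ) / 4) := by positivity
    have h4 : ((n : ℝ) ^ ((1 : ℝ) / 4)) ^ 4 = n := by
      rw [← Real.rpow_natCast, ← Real.rpow_mul hn'.le]; norm_num
    generalize (n : ℝ) ^ ((1 : ℝ) / 4) = a at *
    rw [← h4]; field_simp
  have h3 := h1.trans_tendsto h2
  have h5 : Tendsto (fun n : ℕ => (n : ℝ) * (cwq (y / (n : ℝ) ^ ((1 : ℝ) / 4)) - 1)) atTop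
      (𝓝 (-(y ^ 4) / 12)) := by
    have := h3.add_const (-(y ^ 4) / 12)
    rw [zero_add] at this
    refine this.congr' ?_
    filter_upwards [eventually_gt_atTop 0] with n hn
    have hn' : (0 : ℝ) < n := by exact_mod_cast hn
    have hp : 0 < (n : ℝ) ^ ((1 : ℝ) / 4) := by positivity
    have h4 : ((n : ℝ) ^ ((1 : ℝ) / 4)) ^ 4 = n := by
      rw [← Real.rpow_natCast, ← Real.rpow_mul hn'.le]; norm_num
    simp only [Function.comp]
    rw [div_pow y, h4]
    field_simp
    ring
  simpa using Real.tendsto_one_add_pow_exp_of_tendsto h5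

open Complex in
lemma cwHS (n : ℕ) (a : ℝ) (ha : 0 < a) (han : a ^ 4 = n) (t : ℝ) :
    ∫ y : ℝ, cexp (t * y * I) * ((cwq (y / a) ^ n : ℝ) : ℂ)
      = (1 / 2 ^ n) * (((Real.pi : ℂ) / (a ^ 2 / 2)) ^ (1 / 2 : ℂ)) * cexp (-(t ^ 2 / (2 * a ^ 2)))
        * ∑ s : Fin n → Bool, (Real.exp ((∑ i, pmVec s i) ^ 2 / (2 * n)) : ℂ)
            * cexp (t * ((∑ i, pmVec s i : ℝ) / a ^ 3 : ℂ) * I) := by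
  have haC : (a : ℂ) ≠ 0 := by exact_mod_cast ha.ne'
  have hb : (-((a : ℂ) ^ 2 / 2)).re < 0 := by
    have : (-((a : ℂ) ^ 2 / 2)) = ((-(a ^ 2 / 2) : ℝ) : ℂ) := by push_cast; ring
    rw [this, ofReal_re]
    have : 0 < a ^ 2 := by positivity
    linarith
  have h1 : ∀ y : ℝ, cexp (t * y * I) * ((cwq (y / a) ^ n : ℝ) : ℂ)
      = ∑ s : Fin n → Bool, (1 / 2 ^ n) *
        cexp (-((a : ℂ) ^ 2 / 2) * y ^ 2 + (t * I + (∑ i, pmVec s i : ℝ) / a) * y + 0) := by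
    intro y
    have e1 : cwq (y / a) ^ n = (1 / 2 ^ n) * ∑ s : Fin n → Bool,
        Real.exp (-(a ^ 2 / 2) * y ^ 2 + (∑ i, pmVec s i) / a * y) := by
      have : ∀ s : Fin n → Bool, Real.exp (-(a ^ 2 / 2) * y ^ 2 + (∑ i, pmVec s i) / a * y)
          = Real.exp (-(a ^ 2 / 2) * y ^ 2) * Real.exp ((y / a) * (∑ i, pmVec s i)) := by
        intro s; rw [← Real.exp_add]; congr 1; ring
      simp_rw [this]
      rw [← Finset.mul_sum, cwSum_exp]
      unfold cwq
      rw [mul_pow, mul_pow, ← Real.exp_nat_mul, ← han]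
      have : a ^ 4 * (-(y / a) ^ 2 / 2) = -(a ^ 2 / 2) * y ^ 2 := by field_simp
      rw [this]
      field_simp
    rw [e1]
    push_cast
    rw [Finset.mul_sum, Finset.mul_sum]
    refine Finset.sum_congr rfl fun s _ => ?_
    rw [mul_left_comm, ← Complex.exp_add]
    congr 2
    ring
  simp_rw [h1]
  rw [integral_finsetSum _ (fun s _ => (integrable_cexp_quadratic' hb _ _).const_mul _)]
  rw [Finset.mul_sum]
  refine Finset.sum_congr rfl fun s _ => ?_
  rw [integral_const_mul, integral_cexp_quadratic hb, neg_neg]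
  rw [mul_assoc, mul_assoc, mul_assoc]
  congr 2
  push_cast
  rw [← Complex.exp_add, ← Complex.exp_add]
  congr 1
  have : (n : ℂ) = (a : ℂ) ^ 4 := by exact_mod_cast han.symm
  rw [this]
  field_simp
  ring_nf
  simp only [I_sq]
  ring

lemma isingZ_pos (n : ℕ) : 0 < isingZ (Fin n) 1 (QCW n) := by
  unfold isingZ isingWeight
  exact Finset.sum_pos (fun s _ => Real.exp_pos _) Finset.univ_nonempty

instance cw_isProb (n : ℕ) : IsProbabilityMeasure (isingMeasure (Fin n) 1 (QCW n)) := by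
  constructor
  have hZ := isingZ_pos n
  unfold isingMeasure
  rw [Measure.finsetSum_apply]
  simp only [Measure.smul_apply, measure_univ, smul_eq_mul, mul_one]
  rw [← ENNReal.ofReal_sum_of_nonneg]
  · rw [← Finset.sum_div]
    change ENNReal.ofReal (isingZ (Fin n) 1 (QCW n) / isingZ (Fin n) 1 (QCW n)) = 1
    rw [div_self hZ.ne', ENNReal.ofReal_one]
  · intro s _
    exact div_nonneg (Real.exp_pos _).le hZ.le

lemma cw_integral (n : ℕ) (g : (Fin n → ℝ) → ℂ) :
    ∫ x, g x ∂(isingMeasure (Fin n) 1 (QCW n))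
      = ∑ s : Fin n → Bool,
        ((isingWeight 1 (QCW n) (pmVec s) / isingZ (Fin n) 1 (QCW n) : ℝ) : ℂ) * g (pmVec s) := by
  unfold isingMeasure
  rw [integral_finsetSum_measure]
  · refine Finset.sum_congr rfl fun s _ => ?_
    rw [integral_smul_measure, integral_dirac, ENNReal.toReal_ofReal]
    · simp
    · exact div_nonneg (Real.exp_pos _).le (isingZ_pos n).le
  · intro s _
    exact (integrable_dirac (by finiteness)).smul_measure ENNReal.ofReal_ne_top

lemma cw_meas (n : ℕ) :
    Measurable (fun x : Fin n → ℝ => (n : ℝ) ^ ((1 : ℝ) / 4) * sampleMean x) := by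
  unfold sampleMean; fun_prop

lemma cw_integrable_s11 (n : ℕ) (hn : 0 < n) (a : ℝ) (ha : 0 < a) (han : a ^ 4 = n) :
    Integrable (fun y => cwq (y / a) ^ n) := by
  have hD : Integrable (fun y : ℝ => Real.exp (1 - y ^ 2 / 10)) := by
    have := (integrable_exp_neg_mul_sq (b := 1 / 10) (by norm_num)).const_mul (Real.exp 1)
    refine this.congr (ae_of_all _ fun y => ?_)
    simp only
    rw [← Real.exp_add]; congr 1; ring
  refine hD.mono' ?_ (ae_of_all _ fun y => ?_)
  · have := cwq_cont
    exact Continuous.aestronglyMeasurable (by fun_prop)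
  · rw [Real.norm_of_nonneg (pow_nonneg (cwq_pos _).le _)]
    exact cwq_dom n hn a ha han y

open Complex in
lemma cw_charFun (n : ℕ) (hn : 0 < n) (a : ℝ) (ha : a = (n : ℝ) ^ ((1 : ℝ) / 4)) (t : ℝ) :
    charFun (Measure.map (fun x : Fin n → ℝ => (n : ℝ) ^ ((1 : ℝ) / 4) * sampleMean x)
        (isingMeasure (Fin n) 1 (QCW n))) t
      = cexp (t ^ 2 / (2 * a ^ 2)) * ((∫ y : ℝ, cexp (t * y * I) * ((cwq (y / a) ^ n : ℝ) : ℂ))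
          / ∫ y : ℝ, cexp ((0 : ℝ) * y * I) * ((cwq (y / a) ^ n : ℝ) : ℂ)) := by
  have hn' : (0 : ℝ) < n := by exact_mod_cast hn
  have ha0 : 0 < a := by rw [ha]; positivity
  have han : a ^ 4 = n := by
    rw [ha, ← Real.rpow_natCast, ← Real.rpow_mul hn'.le]; norm_num
  rw [charFun_apply_real, integral_map (cw_meas n).aemeasurable (by fun_prop), cw_integral,
    cwHS n a ha0 han t, cwHS n a ha0 han 0, ← ha]
  have hw : ∀ s : Fin n → Bool, isingWeight 1 (QCW n) (pmVec s)
      = Real.exp (-(1 / 2)) * Real.exp ((∑ i, pmVec s i) ^ 2 / (2 * n)) := cwWeight n hn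
  have hZ : isingZ (Fin n) 1 (QCW n) = Real.exp (-(1 / 2)) *
      ∑ s : Fin n → Bool, Real.exp ((∑ i, pmVec s i) ^ 2 / (2 * n)) := by
    unfold isingZ; simp_rw [hw]; rw [Finset.mul_sum]
  have hm : ∀ s : Fin n → Bool, ((a * sampleMean (pmVec s) : ℝ) : ℂ)
      = ((∑ i, pmVec s i : ℝ) : ℂ) / (a : ℂ) ^ 3 := by
    intro s
    unfold sampleMean
    rw [Fintype.card_fin, ← han]
    push_cast
    have haC : (a : ℂ) ≠ 0 := by exact_mod_cast ha0.ne'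
    field_simp
  simp_rw [hm, hw]
  rw [hZ]
  have hS : (0 : ℝ) < ∑ s : Fin n → Bool, Real.exp ((∑ i, pmVec s i) ^ 2 / (2 * n)) :=
    Finset.sum_pos (fun s _ => Real.exp_pos _) Finset.univ_nonempty
  have hK : (((Real.pi : ℂ) / (a ^ 2 / 2)) ^ (1 / 2 : ℂ)) ≠ 0 := by
    rw [Complex.cpow_ne_zero_iff]
    left
    have haC : (a : ℂ) ≠ 0 := by exact_mod_cast ha0.ne'
    have : (Real.pi : ℂ) ≠ 0 := by exact_mod_cast Real.pi_ne_zero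
    exact div_ne_zero this (div_ne_zero (pow_ne_zero _ haC) two_ne_zero)
  generalize (((Real.pi : ℂ) / (a ^ 2 / 2)) ^ (1 / 2 : ℂ)) = K at *
  have hzero : ∑ s : Fin n → Bool, (Real.exp ((∑ i, pmVec s i) ^ 2 / (2 * n)) : ℂ)
            * cexp ((0 : ℝ) * ((∑ i, pmVec s i : ℝ) / a ^ 3 : ℂ) * I)
      = ((∑ s : Fin n → Bool, Real.exp ((∑ i, pmVec s i) ^ 2 / (2 * n)) : ℝ) : ℂ) := by
    push_cast
    simp
  rw [hzero]
  generalize (∑ s : Fin n → Bool, Real.exp ((∑ i, pmVec s i) ^ 2 / (2 * n))) = S at *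
  have hSC : (S : ℂ) ≠ 0 := by exact_mod_cast hS.ne'
  have e0 : cexp (-((0 : ℝ) ^ 2 / (2 * a ^ 2))) = 1 := by simp
  have e1 : cexp (t ^ 2 / (2 * a ^ 2)) * cexp (-(t ^ 2 / (2 * a ^ 2))) = 1 := by
    rw [← Complex.exp_add]; simp
  have h2 : (2 : ℂ) ^ n ≠ 0 := pow_ne_zero _ two_ne_zero
  have hE := (Real.exp_pos (-(1 / 2))).ne'
  have lhs : ∀ s : Fin n → Bool,
     ((Real.exp (-(1 / 2)) * Real.exp ((∑ i, pmVec s i) ^ 2 / (2 * n)) / (Real.exp (-(1 / 2)) * S) : ℝ) : ℂ)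
      = (1 / (S : ℂ)) * (Real.exp ((∑ i, pmVec s i) ^ 2 / (2 * n)) : ℂ) := by
    intro s
    rw [mul_div_mul_left _ _ hE, ofReal_div]
    ring
  simp_rw [lhs, mul_assoc (1 / (S : ℂ))]
  rw [← Finset.mul_sum]
  simp only [mul_assoc]
  generalize (∑ s : Fin n → Bool, (Real.exp ((∑ i, pmVec s i) ^ 2 / (2 * n)) : ℂ)
            * cexp (t * (((∑ i, pmVec s i : ℝ) / a ^ 3 : ℂ) * I))) = T
  rw [e0]
  have : cexp (t ^ 2 / (2 * a ^ 2)) * (1 / 2 ^ n * (K * (cexp (-(t ^ 2 / (2 * a ^ 2))) * T)) / (1 / 2 ^ n * (K * (1 * (S : ℂ)))))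
    = (cexp (t ^ 2 / (2 * a ^ 2)) * cexp (-(t ^ 2 / (2 * a ^ 2)))) * (T / S) := by
    field_simp
  rw [this, e1]
  ring

lemma cw_int_tendsto (t : ℝ) :
    Tendsto (fun n : ℕ => ∫ y : ℝ, Complex.exp (t * y * Complex.I) *
        ((cwq (y / (n : ℝ) ^ ((1 : ℝ) / 4)) ^ n : ℝ) : ℂ)) atTop
      (𝓝 (∫ y : ℝ, Complex.exp (t * y * Complex.I) * ((Real.exp (-(y ^ 4) / 12) : ℝ) : ℂ))) := by
  have hD : Integrable (fun y : ℝ => Real.exp (1 - y ^ 2 / 10)) := by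
    have := (integrable_exp_neg_mul_sq (b := 1 / 10) (by norm_num)).const_mul (Real.exp 1)
    refine this.congr (ae_of_all _ fun y => ?_)
    simp only
    rw [← Real.exp_add]; congr 1; ring
  refine tendsto_integral_filter_of_dominated_convergence _ ?_ ?_ hD ?_
  · refine Eventually.of_forall fun n => ?_
    have := cwq_cont
    exact Continuous.aestronglyMeasurable (by fun_prop)
  · filter_upwards [eventually_gt_atTop 0] with n hn
    refine ae_of_all _ fun y => ?_
    have hn' : (0 : ℝ) < n := by exact_mod_cast hn
    have h1 : ‖Complex.exp (t * y * Complex.I)‖ = 1 := by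
      rw [← Complex.ofReal_mul, Complex.norm_exp_ofReal_mul_I]
    rw [norm_mul, h1, one_mul, Complex.norm_real, Real.norm_of_nonneg (pow_nonneg (cwq_pos _).le _)]
    refine cwq_dom n hn _ (by positivity) ?_ y
    rw [← Real.rpow_natCast, ← Real.rpow_mul hn'.le]; norm_num
  · refine ae_of_all _ fun y => ?_
    exact ((Complex.continuous_ofReal.tendsto _).comp (cwq_tendsto y)).const_mul _

lemma quartic_integrable : Integrable (fun y : ℝ => Real.exp (-(y ^ 4) / 12)) := by
  have := (integrable_exp_neg_mul_sq (b := 1) (by norm_num)).const_mul (Real.exp 3)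
  refine this.mono' (Continuous.aestronglyMeasurable (by fun_prop)) (ae_of_all _ fun y => ?_)
  rw [Real.norm_of_nonneg (Real.exp_pos _).le, ← Real.exp_add]
  apply Real.exp_le_exp.2
  nlinarith [sq_nonneg (y ^ 2 - 6)]

lemma quartic_pos : 0 < ∫ y : ℝ, Real.exp (-(y ^ 4) / 12) :=
  integral_exp_pos quartic_integrable

instance quartic_prob : IsProbabilityMeasure quarticLaw := by
  constructor
  unfold quarticLaw
  rw [withDensity_apply _ MeasurableSet.univ, Measure.restrict_univ,
    ← ofReal_integral_eq_lintegral_ofReal (quartic_integrable.div_const _)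
      (ae_of_all _ fun y => div_nonneg (Real.exp_pos _).le quartic_pos.le),
    integral_div, div_self quartic_pos.ne', ENNReal.ofReal_one]

lemma quartic_charFun (t : ℝ) :
    charFun quarticLaw t
      = (∫ y : ℝ, Complex.exp (t * y * Complex.I) * ((Real.exp (-(y ^ 4) / 12) : ℝ) : ℂ))
        / ∫ y : ℝ, Complex.exp ((0 : ℝ) * y * Complex.I) * ((Real.exp (-(y ^ 4) / 12) : ℝ) : ℂ) := by
  rw [charFun_apply_real]
  unfold quarticLaw
  rw [integral_withDensity_eq_integral_toReal_smul (by fun_prop) (ae_of_all _ fun _ => ENNReal.ofReal_lt_top)]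
  have : ∀ y : ℝ, Complex.exp ((0 : ℝ) * y * Complex.I) * ((Real.exp (-(y ^ 4) / 12) : ℝ) : ℂ)
    = ((Real.exp (-(y ^ 4) / 12) : ℝ) : ℂ) := by intro y; simp
  simp_rw [this]
  rw [integral_complex_ofReal, ← integral_div]
  refine integral_congr_ae (ae_of_all _ fun y => ?_)
  simp only
  rw [ENNReal.toReal_ofReal (div_nonneg (Real.exp_pos _).le quartic_pos.le), Complex.real_smul,
    Complex.ofReal_div]
  ring

lemma cw_charFun_tendsto (t : ℝ) :
    Tendsto (fun n : ℕ => charFun (Measure.map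
        (fun x : Fin n → ℝ => (n : ℝ) ^ ((1 : ℝ) / 4) * sampleMean x)
        (isingMeasure (Fin n) 1 (QCW n))) t) atTop (𝓝 (charFun quarticLaw t)) := by
  have hne : ∫ y : ℝ, Complex.exp ((0 : ℝ) * y * Complex.I) * ((Real.exp (-(y ^ 4) / 12) : ℝ) : ℂ) ≠ 0 := by
    have : ∀ y : ℝ, Complex.exp ((0 : ℝ) * y * Complex.I) * ((Real.exp (-(y ^ 4) / 12) : ℝ) : ℂ)
      = ((Real.exp (-(y ^ 4) / 12) : ℝ) : ℂ) := by intro y; simp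
    simp_rw [this]
    rw [integral_complex_ofReal]
    exact_mod_cast quartic_pos.ne'
  have ha : Tendsto (fun n : ℕ => (n : ℝ) ^ ((1 : ℝ) / 4)) atTop atTop :=
    (tendsto_rpow_atTop (by norm_num)).comp tendsto_natCast_atTop_atTop
  have h1 : Tendsto (fun n : ℕ => t ^ 2 / (2 * ((n : ℝ) ^ ((1 : ℝ) / 4)) ^ 2)) atTop (𝓝 0) :=
    (((tendsto_pow_atTop two_ne_zero).comp ha).const_mul_atTop (by norm_num : (0 : ℝ) < 2)).const_div_atTop _
  have h2 : Tendsto (fun n : ℕ => Complex.exp ((t : ℂ) ^ 2 / (2 * (((n : ℝ) ^ ((1 : ℝ) / 4) : ℝ) : ℂ) ^ 2)))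
      atTop (𝓝 1) := by
    have := (Complex.continuous_exp.comp Complex.continuous_ofReal).tendsto 0 |>.comp h1
    simp only [Function.comp, Complex.ofReal_zero, Complex.exp_zero] at this
    refine this.congr fun n => ?_
    simp
  have h3 := h2.mul ((cw_int_tendsto t).div (cw_int_tendsto 0) hne)
  rw [one_mul, ← quartic_charFun] at h3
  refine h3.congr' ?_
  filter_upwards [eventually_gt_atTop 0] with n hn
  exact (cw_charFun n hn _ rfl t).symm

/-- **(Curie–Weiss CLT, critical `β = 1`).** If `X ~ P_{1,Q^{CW}}`, then `n^{1/4} X̄ₙ`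
converges in distribution to the law with density proportional to `exp(-y⁴/12)`. -/
theorem curieWeiss_clt_critical :
    TendstoInDistribution
      (fun n => Measure.map (fun x : Fin n → ℝ => (n : ℝ) ^ ((1 : ℝ) / 4) * sampleMean x)
        (isingMeasure (Fin n) 1 (QCW n)))
      quarticLaw := by
  intro f
  have hp : ∀ n : ℕ, IsProbabilityMeasure (Measure.map
      (fun x : Fin n → ℝ => (n : ℝ) ^ ((1 : ℝ) / 4) * sampleMean x)
        (isingMeasure (Fin n) 1 (QCW n))) := fun n =>
    Measure.isProbabilityMeasure_map (cw_meas n).aemeasurable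
  have h := (ProbabilityMeasure.tendsto_iff_tendsto_charFun
    (μ := fun n : ℕ => (⟨_, hp n⟩ : ProbabilityMeasure ℝ)) (μ₀ := ⟨quarticLaw, quartic_prob⟩)).2
    (fun t => cw_charFun_tendsto t)
  exact (ProbabilityMeasure.tendsto_iff_forall_integral_tendsto.1 h) f

end
end
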